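/- Example 1, second channel (Coding scheme 2 beats Coding scheme 1): Consider the binary SD-MAWC with X1 = X2 = S-alphabet = Y-alphabet = Z-alphabet = {0,1}, S ~ Bernoulli(p) i.i.d., legitimate output Y = X1 XOR X2 XOR S, and eavesdropper output Z = X2. If 1 - h(p) >= h(p), then the rate pair (0, h(p)) belongs to R_2 (achievable by Coding scheme 2), whereas (0, h(p)) does not belong to R_1: for every admissible joint law one has I(U2;Z|S,U) >= I(U2;Y|S,U,U1) >= I(U2;Y|V,U,U1) (so R_1 reduces to its subregion R_{13}), and there R2 <= I(V;Y) <= h(p) with equality possible only in a configuration forcing R2 = 0; hence every point (0,R2) in R_1 has R2 < h(p). -/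

import Mathlib

/-!
For the inner bound of Coding scheme 2, take `U1` constant, `U2` uniform, `X1 = 0` and `X2 = U2`.
Then `Y = U2 ⊕ S`, `Z = U2`, so `H(S|Z,U2) = h(p)`, `H(S|Y,U1,U2) = 0` and
`I(U2;Y|U1) = 1 - h(p)`; using the whole state entropy as secret key at the second sender gives
the pair `(0, h(p))` in `R_{23}` (`mem_regionR23`).

For Coding scheme 1, the factorization of the joint law yields three conditional independences
(collected, together with the channel law, in `Scheme1`). By submodularity of entropy
(`H_submod'`) they imply the mutual-information inequalities of the statement. Consequently, in
each of the three subregions, `R2` is at most `I(V;Y)` and at most `I(U2;Y|V,U,U1)`. The former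
is at most `I(V;S) ≤ h(p)`; equality makes `S` a function of `V` and of `Y`, and since `S` and `Y`
are binary with `S` non-degenerate, `Y` is then a function of `S` and hence of `V`, so that
`I(U2;Y|V,U,U1) = 0 < h(p)` (`Scheme1.cMI_nonpos_of_le_MI`). Thus `R2 < h(p)` on every
subregion, and this open half-plane is convex, so the bound passes to the convex hull.
-/


open scoped BigOperators

noncomputable section

namespace Paper

/-- `p` is a probability mass function on the finite type `α`. -/
def IsPmf {α : Type*} [Fintype α] (p : α → ℝ) : Prop :=
  (∀ a, 0 ≤ p a) ∧ ∑ a, p a = 1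

/-- `k` is a conditional pmf (a channel / stochastic kernel). -/
def IsKernel {α β : Type*} [Fintype β] (k : α → β → ℝ) : Prop :=
  ∀ a, IsPmf (k a)

/-- Shannon entropy (base 2) of a mass function on a finite type. -/
def ent {α : Type*} [Fintype α] (p : α → ℝ) : ℝ :=
  -∑ a, p a * Real.logb 2 (p a)

/-- Law (pushforward) of the random variable `X` under the mass function `p`. -/
def law {Ω α : Type*} [Fintype Ω] [DecidableEq α] (p : Ω → ℝ) (X : Ω → α) :
    α → ℝ := fun a => ∑ ω, if X ω = a then p ω else 0

/-- Entropy `H(X)` of a random variable `X`. -/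
def H {Ω α : Type*} [Fintype Ω] [Fintype α] [DecidableEq α] (p : Ω → ℝ)
    (X : Ω → α) : ℝ := ent (law p X)

/-- Conditional entropy `H(X|Y)`. -/
def Hc {Ω α β : Type*} [Fintype Ω] [Fintype α] [Fintype β] [DecidableEq α]
    [DecidableEq β] (p : Ω → ℝ) (X : Ω → α) (Y : Ω → β) : ℝ :=
  H p (fun ω => (X ω, Y ω)) - H p Y

/-- Mutual information `I(X;Y)`. -/
def MI {Ω α β : Type*} [Fintype Ω] [Fintype α] [Fintype β] [DecidableEq α]
    [DecidableEq β] (p : Ω → ℝ) (X : Ω → α) (Y : Ω → β) : ℝ :=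
  H p X + H p Y - H p (fun ω => (X ω, Y ω))

/-- Conditional mutual information `I(X;Y|Z)`. -/
def cMI {Ω α β γ : Type*} [Fintype Ω] [Fintype α] [Fintype β] [Fintype γ]
    [DecidableEq α] [DecidableEq β] [DecidableEq γ] (p : Ω → ℝ) (X : Ω → α)
    (Y : Ω → β) (Z : Ω → γ) : ℝ :=
  Hc p X Z - Hc p X (fun ω => (Y ω, Z ω))

/-- Kullback–Leibler divergence (base 2). -/
def KL {α : Type*} [Fintype α] (p q : α → ℝ) : ℝ :=
  ∑ a, p a * Real.logb 2 (p a / q a)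

/-- Binary entropy function. -/
def hb (x : ℝ) : ℝ := -(x * Real.logb 2 x) - (1 - x) * Real.logb 2 (1 - x)

/-- A (message-indexed) encoder is causal: its `j`-th output symbol depends only on the
first `j` state symbols. -/
def Causal {M A B : Type*} {n : ℕ} (e : M → (Fin n → A) → Fin n → B) : Prop :=
  ∀ m s s' j, (∀ i, i ≤ j → s i = s' i) → e m s j = e m s' j

/-- A strictly causal encoder: its `j`-th output symbol depends only on the state symbols
strictly before `j`. -/
def StrictlyCausal {M A B : Type*} {n : ℕ} (e : M → (Fin n → A) → Fin n → B) : Prop :=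
  ∀ m s s' j, (∀ i, i < j → s i = s' i) → e m s j = e m s' j

/-- A length-`n` two-sender code with message sets `Fin m1`, `Fin m2`: encoders map a
message and the state sequence to a channel-input sequence, and the decoder maps the
channel output sequence to a message pair. -/
structure Code2 (A1 A2 AS AY AZ : Type) (n m1 m2 : ℕ) where
  enc1 : Fin m1 → (Fin n → AS) → Fin n → A1
  enc2 : Fin m2 → (Fin n → AS) → Fin n → A2
  dec : (Fin n → AY) → Fin m1 × Fin m2

/-- Sample space carrying the auxiliary random variables `(V,U,U1,U2,X1,X2,S,Y,Z)`. -/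
abbrev O9 (V U U1 U2 A1 A2 AS AY AZ : Type) : Type :=
  V × U × U1 × U2 × A1 × A2 × AS × AY × AZ

namespace O9
variable {V U U1 U2 A1 A2 AS AY AZ : Type}
def v (ω : O9 V U U1 U2 A1 A2 AS AY AZ) : V := ω.1
def u (ω : O9 V U U1 U2 A1 A2 AS AY AZ) : U := ω.2.1
def u1 (ω : O9 V U U1 U2 A1 A2 AS AY AZ) : U1 := ω.2.2.1
def u2 (ω : O9 V U U1 U2 A1 A2 AS AY AZ) : U2 := ω.2.2.2.1
def x1 (ω : O9 V U U1 U2 A1 A2 AS AY AZ) : A1 := ω.2.2.2.2.1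
def x2 (ω : O9 V U U1 U2 A1 A2 AS AY AZ) : A2 := ω.2.2.2.2.2.1
def s (ω : O9 V U U1 U2 A1 A2 AS AY AZ) : AS := ω.2.2.2.2.2.2.1
def y (ω : O9 V U U1 U2 A1 A2 AS AY AZ) : AY := ω.2.2.2.2.2.2.2.1
def z (ω : O9 V U U1 U2 A1 A2 AS AY AZ) : AZ := ω.2.2.2.2.2.2.2.2
end O9

/-- Sample space carrying the auxiliary random variables `(U1,U2,X1,X2,S,Y,Z)`. -/
abbrev O7 (U1 U2 A1 A2 AS AY AZ : Type) : Type :=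
  U1 × U2 × A1 × A2 × AS × AY × AZ

namespace O7
variable {U1 U2 A1 A2 AS AY AZ : Type}
def u1 (ω : O7 U1 U2 A1 A2 AS AY AZ) : U1 := ω.1
def u2 (ω : O7 U1 U2 A1 A2 AS AY AZ) : U2 := ω.2.1
def x1 (ω : O7 U1 U2 A1 A2 AS AY AZ) : A1 := ω.2.2.1
def x2 (ω : O7 U1 U2 A1 A2 AS AY AZ) : A2 := ω.2.2.2.1
def s (ω : O7 U1 U2 A1 A2 AS AY AZ) : AS := ω.2.2.2.2.1
def y (ω : O7 U1 U2 A1 A2 AS AY AZ) : AY := ω.2.2.2.2.2.1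
def z (ω : O7 U1 U2 A1 A2 AS AY AZ) : AZ := ω.2.2.2.2.2.2
end O7

/-- An auxiliary joint law `P_S P_{V|S} P_U P_{U1|U} P_{U2|U} P_{X1|UU1S} P_{X2|UU2S}`
over arbitrary finite auxiliary alphabets. -/
structure AuxLawR1 (A1 A2 AS AY AZ : Type) [Fintype A1] [Fintype A2] [Fintype AS]
    [Fintype AY] [Fintype AZ] where
  V : Type
  U : Type
  U1 : Type
  U2 : Type
  [fV : Fintype V]
  [fU : Fintype U]
  [fU1 : Fintype U1]
  [fU2 : Fintype U2]
  [dV : DecidableEq V]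
  [dU : DecidableEq U]
  [dU1 : DecidableEq U1]
  [dU2 : DecidableEq U2]
  PV : AS → V → ℝ
  PU : U → ℝ
  PU1 : U → U1 → ℝ
  PU2 : U → U2 → ℝ
  PX1 : U → U1 → AS → A1 → ℝ
  PX2 : U → U2 → AS → A2 → ℝ
  hPV : IsKernel PV
  hPU : IsPmf PU
  hPU1 : IsKernel PU1
  hPU2 : IsKernel PU2
  hPX1 : ∀ u u1 s, IsPmf (PX1 u u1 s)
  hPX2 : ∀ u u2 s, IsPmf (PX2 u u2 s)

attribute [instance] AuxLawR1.fV AuxLawR1.fU AuxLawR1.fU1 AuxLawR1.fU2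
  AuxLawR1.dV AuxLawR1.dU AuxLawR1.dU1 AuxLawR1.dU2

/-- An auxiliary joint law `P_S P_{U1} P_{U2} P_{X1|U1S} P_{X2|U2S}` over arbitrary
finite auxiliary alphabets (for Coding scheme 2). -/
structure AuxLawR2 (A1 A2 AS AY AZ : Type) [Fintype A1] [Fintype A2] [Fintype AS]
    [Fintype AY] [Fintype AZ] where
  U1 : Type
  U2 : Type
  [fU1 : Fintype U1]
  [fU2 : Fintype U2]
  [dU1 : DecidableEq U1]
  [dU2 : DecidableEq U2]
  PU1 : U1 → ℝ
  PU2 : U2 → ℝ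
  PX1 : U1 → AS → A1 → ℝ
  PX2 : U2 → AS → A2 → ℝ
  hPU1 : IsPmf PU1
  hPU2 : IsPmf PU2
  hPX1 : ∀ u1 s, IsPmf (PX1 u1 s)
  hPX2 : ∀ u2 s, IsPmf (PX2 u2 s)

attribute [instance] AuxLawR2.fU1 AuxLawR2.fU2 AuxLawR2.dU1 AuxLawR2.dU2

variable {A1 A2 AS AY AZ : Type} [Fintype A1] [Fintype A2] [Fintype AS]
  [Fintype AY] [Fintype AZ] [DecidableEq A1] [DecidableEq A2] [DecidableEq AS]
  [DecidableEq AY] [DecidableEq AZ]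

/-- Joint distribution of (uniform independent) messages, the i.i.d. state sequence and
the memoryless channel outputs, induced by a code. -/
def jp2 (PS : AS → ℝ) (W : A1 → A2 → AS → AY × AZ → ℝ) {n m1 m2 : ℕ}
    (c : Code2 A1 A2 AS AY AZ n m1 m2) :
    Fin m1 × Fin m2 × (Fin n → AS) × (Fin n → AY) × (Fin n → AZ) → ℝ :=
  fun ω =>
    (m1 : ℝ)⁻¹ * (m2 : ℝ)⁻¹ * (∏ i, PS (ω.2.2.1 i)) *
      ∏ i, W (c.enc1 ω.1 ω.2.2.1 i) (c.enc2 ω.2.1 ω.2.2.1 i) (ω.2.2.1 i)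
        (ω.2.2.2.1 i, ω.2.2.2.2 i)

/-- Average probability of a decoding error. -/
def Perr2 (PS : AS → ℝ) (W : A1 → A2 → AS → AY × AZ → ℝ) {n m1 m2 : ℕ}
    (c : Code2 A1 A2 AS AY AZ n m1 m2) : ℝ :=
  ∑ ω, if c.dec ω.2.2.2.1 = (ω.1, ω.2.1) then 0 else jp2 PS W c ω

/-- Information leakage `I(M1,M2; Z^n)` to the eavesdropper. -/
def Leak2 (PS : AS → ℝ) (W : A1 → A2 → AS → AY × AZ → ℝ) {n m1 m2 : ℕ}
    (c : Code2 A1 A2 AS AY AZ n m1 m2) : ℝ :=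
  MI (jp2 PS W c) (fun ω => (ω.1, ω.2.1)) (fun ω => ω.2.2.2.2)

/-- `(R1,R2)` is achievable with causal CSI at both encoders under the strong secrecy
criterion. -/
def AchievableCSI (PS : AS → ℝ) (W : A1 → A2 → AS → AY × AZ → ℝ) (R : ℝ × ℝ) : Prop :=
  0 ≤ R.1 ∧ 0 ≤ R.2 ∧
    ∀ ε : ℝ, 0 < ε → ∃ n0 : ℕ, ∀ n : ℕ, n0 < n →
      ∃ c : Code2 A1 A2 AS AY AZ n ⌈(2 : ℝ) ^ ((n : ℝ) * R.1)⌉₊ ⌈(2 : ℝ) ^ ((n : ℝ) * R.2)⌉₊,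
        Causal c.enc1 ∧ Causal c.enc2 ∧ Perr2 PS W c ≤ ε ∧ Leak2 PS W c ≤ ε

/-- The strong-secrecy capacity region `C^{CSI-E}` (closure of the achievable pairs). -/
def CapCSIE (PS : AS → ℝ) (W : A1 → A2 → AS → AY × AZ → ℝ) : Set (ℝ × ℝ) :=
  closure {R | AchievableCSI PS W R}

section AuxR1
variable {V U U1 U2 : Type} [Fintype V] [Fintype U] [Fintype U1] [Fintype U2]
  [DecidableEq V] [DecidableEq U] [DecidableEq U1] [DecidableEq U2]

/-- The joint pmf `P_S P_{V|S} P_U P_{U1|U} P_{U2|U} P_{X1|UU1S} P_{X2|UU2S} W`. -/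
def jointR1 (PS : AS → ℝ) (W : A1 → A2 → AS → AY × AZ → ℝ) (PV : AS → V → ℝ)
    (PU : U → ℝ) (PU1 : U → U1 → ℝ) (PU2 : U → U2 → ℝ)
    (PX1 : U → U1 → AS → A1 → ℝ) (PX2 : U → U2 → AS → A2 → ℝ) :
    O9 V U U1 U2 A1 A2 AS AY AZ → ℝ :=
  fun ω => PS ω.s * PV ω.s ω.v * PU ω.u * PU1 ω.u ω.u1 * PU2 ω.u ω.u2 *
    PX1 ω.u ω.u1 ω.s ω.x1 * PX2 ω.u ω.u2 ω.s ω.x2 * W ω.x1 ω.x2 ω.s (ω.y, ω.z)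

/-- `R_SUM = min{I(U1,U2;Y|V,U), I(V,U,U1,U2;Y) - I(V;S)}`. -/
def Rsum (p : O9 V U U1 U2 A1 A2 AS AY AZ → ℝ) : ℝ :=
  min (cMI p (fun ω => (ω.u1, ω.u2)) (fun ω => ω.y) (fun ω => (ω.v, ω.u)))
    (MI p (fun ω => (ω.v, ω.u, ω.u1, ω.u2)) (fun ω => ω.y) -
      MI p (fun ω => ω.v) (fun ω => ω.s))

/-- The region `R_{11}`. -/
def regionR11 (p : O9 V U U1 U2 A1 A2 AS AY AZ → ℝ) : Set (ℝ × ℝ) :=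
  {R | 0 ≤ R.1 ∧ 0 ≤ R.2 ∧ ∃ r11 r21 : ℝ, 0 ≤ r11 ∧ 0 ≤ r21 ∧
    r11 + r21 ≤ MI p (fun ω => ω.v) (fun ω => ω.y) -
      MI p (fun ω => ω.v) (fun ω => (ω.u, ω.z)) ∧
    R.1 ≤ min (cMI p (fun ω => ω.u1) (fun ω => ω.y) (fun ω => (ω.v, ω.u, ω.u2)) -
        cMI p (fun ω => ω.u1) (fun ω => ω.z) (fun ω => (ω.s, ω.u)) + r11)
      (cMI p (fun ω => ω.u1) (fun ω => ω.y) (fun ω => (ω.v, ω.u, ω.u2))) ∧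
    R.2 ≤ min (cMI p (fun ω => ω.u2) (fun ω => ω.y) (fun ω => (ω.v, ω.u, ω.u1)) -
        cMI p (fun ω => ω.u2) (fun ω => ω.z) (fun ω => (ω.s, ω.u)) + r21)
      (cMI p (fun ω => ω.u2) (fun ω => ω.y) (fun ω => (ω.v, ω.u, ω.u1))) ∧
    R.1 + R.2 ≤ min (Rsum p -
        cMI p (fun ω => (ω.u1, ω.u2)) (fun ω => ω.z) (fun ω => (ω.s, ω.u)) + r11 + r21)
      (Rsum p)}

/-- The region `R_{12}` (wiretap coding not available at Encoder 1). -/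
def regionR12 (p : O9 V U U1 U2 A1 A2 AS AY AZ → ℝ) : Set (ℝ × ℝ) :=
  {R | 0 ≤ R.1 ∧ 0 ≤ R.2 ∧ ∃ r11 r21 : ℝ, 0 ≤ r11 ∧ 0 ≤ r21 ∧
    r11 + r21 ≤ MI p (fun ω => ω.v) (fun ω => ω.y) -
      MI p (fun ω => ω.v) (fun ω => (ω.z, ω.u, ω.u1)) ∧
    R.1 ≤ min (cMI p (fun ω => ω.u1) (fun ω => ω.y) (fun ω => (ω.v, ω.u, ω.u2))) r11 ∧
    R.2 ≤ min (cMI p (fun ω => ω.u2) (fun ω => ω.y) (fun ω => (ω.v, ω.u, ω.u1)) -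
        cMI p (fun ω => ω.u2) (fun ω => ω.z) (fun ω => (ω.s, ω.u, ω.u1)) + r21)
      (cMI p (fun ω => ω.u2) (fun ω => ω.y) (fun ω => (ω.v, ω.u, ω.u1))) ∧
    R.1 + R.2 ≤ min (min (Rsum p)
        (Rsum p - cMI p (fun ω => ω.u2) (fun ω => ω.z) (fun ω => (ω.s, ω.u, ω.u1)) + r21))
      (cMI p (fun ω => ω.u2) (fun ω => ω.y) (fun ω => (ω.v, ω.u, ω.u1)) -
        cMI p (fun ω => ω.u2) (fun ω => ω.z) (fun ω => (ω.s, ω.u, ω.u1)) + r11 + r21)}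

/-- The region `R_{13}` (wiretap coding not available at Encoder 2). -/
def regionR13 (p : O9 V U U1 U2 A1 A2 AS AY AZ → ℝ) : Set (ℝ × ℝ) :=
  {R | 0 ≤ R.1 ∧ 0 ≤ R.2 ∧ ∃ r11 r21 : ℝ, 0 ≤ r11 ∧ 0 ≤ r21 ∧
    r11 + r21 ≤ MI p (fun ω => ω.v) (fun ω => ω.y) -
      MI p (fun ω => ω.v) (fun ω => (ω.z, ω.u, ω.u2)) ∧
    R.1 ≤ min (cMI p (fun ω => ω.u1) (fun ω => ω.y) (fun ω => (ω.v, ω.u, ω.u2)) -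
        cMI p (fun ω => ω.u1) (fun ω => ω.z) (fun ω => (ω.s, ω.u, ω.u2)) + r11)
      (cMI p (fun ω => ω.u1) (fun ω => ω.y) (fun ω => (ω.v, ω.u, ω.u2))) ∧
    R.2 ≤ min (cMI p (fun ω => ω.u2) (fun ω => ω.y) (fun ω => (ω.v, ω.u, ω.u1))) r21 ∧
    R.1 + R.2 ≤ min (min (Rsum p)
        (Rsum p - cMI p (fun ω => ω.u1) (fun ω => ω.z) (fun ω => (ω.s, ω.u, ω.u2)) + r11))
      (cMI p (fun ω => ω.u1) (fun ω => ω.y) (fun ω => (ω.v, ω.u, ω.u2)) -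
        cMI p (fun ω => ω.u1) (fun ω => ω.z) (fun ω => (ω.s, ω.u, ω.u2)) + r11 + r21)}

end AuxR1

/-- The joint law determined by an auxiliary-law datum. -/
def AuxLawR1.joint (L : AuxLawR1 A1 A2 AS AY AZ) (PS : AS → ℝ)
    (W : A1 → A2 → AS → AY × AZ → ℝ) : O9 L.V L.U L.U1 L.U2 A1 A2 AS AY AZ → ℝ :=
  jointR1 PS W L.PV L.PU L.PU1 L.PU2 L.PX1 L.PX2

/-- The region `R_1` of Theorem 2: the convex hull of the union, over all auxiliary
joint laws, of `R_{11} ∪ R_{12} ∪ R_{13}`. -/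
def RegionR1 (PS : AS → ℝ) (W : A1 → A2 → AS → AY × AZ → ℝ) : Set (ℝ × ℝ) :=
  convexHull ℝ {R | ∃ L : AuxLawR1 A1 A2 AS AY AZ,
    R ∈ regionR11 (L.joint PS W) ∪ regionR12 (L.joint PS W) ∪ regionR13 (L.joint PS W)}

section AuxR2
variable {U1 U2 : Type} [Fintype U1] [Fintype U2] [DecidableEq U1] [DecidableEq U2]

/-- The joint pmf `P_S P_{U1} P_{U2} P_{X1|U1S} P_{X2|U2S} W`. -/
def jointR2 (PS : AS → ℝ) (W : A1 → A2 → AS → AY × AZ → ℝ) (PU1 : U1 → ℝ)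
    (PU2 : U2 → ℝ) (PX1 : U1 → AS → A1 → ℝ) (PX2 : U2 → AS → A2 → ℝ) :
    O7 U1 U2 A1 A2 AS AY AZ → ℝ :=
  fun ω => PS ω.s * PU1 ω.u1 * PU2 ω.u2 * PX1 ω.u1 ω.s ω.x1 * PX2 ω.u2 ω.s ω.x2 *
    W ω.x1 ω.x2 ω.s (ω.y, ω.z)

/-- The region `R_{21}`. -/
def regionR21 (p : O7 U1 U2 A1 A2 AS AY AZ → ℝ) : Set (ℝ × ℝ) :=
  {R | 0 ≤ R.1 ∧ 0 ≤ R.2 ∧ ∃ r11 r12 r21 r22 : ℝ,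
    0 ≤ r11 ∧ 0 ≤ r12 ∧ 0 ≤ r21 ∧ 0 ≤ r22 ∧
    r11 + r12 + r21 + r22 ≤ Hc p (fun ω => ω.s) (fun ω => ω.z) ∧
    Hc p (fun ω => ω.s) (fun ω => (ω.y, ω.u1, ω.u2)) ≤ r12 + r22 ∧
    R.1 ≤ min (cMI p (fun ω => ω.u1) (fun ω => ω.y) (fun ω => ω.u2) -
        cMI p (fun ω => ω.u1) (fun ω => ω.z) (fun ω => ω.s) + r11)
      (cMI p (fun ω => ω.u1) (fun ω => ω.y) (fun ω => ω.u2) - r12) ∧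
    R.2 ≤ min (cMI p (fun ω => ω.u2) (fun ω => ω.y) (fun ω => ω.u1) -
        cMI p (fun ω => ω.u2) (fun ω => ω.z) (fun ω => ω.s) + r21)
      (cMI p (fun ω => ω.u2) (fun ω => ω.y) (fun ω => ω.u1) - r22) ∧
    R.1 + R.2 ≤ min (MI p (fun ω => (ω.u1, ω.u2)) (fun ω => ω.y) -
        cMI p (fun ω => (ω.u1, ω.u2)) (fun ω => ω.z) (fun ω => ω.s) +
        Hc p (fun ω => ω.s) (fun ω => ω.z) -
        Hc p (fun ω => ω.s) (fun ω => (ω.u1, ω.u2, ω.y)))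
      (MI p (fun ω => (ω.u1, ω.u2)) (fun ω => ω.y) -
        Hc p (fun ω => ω.s) (fun ω => (ω.u1, ω.u2, ω.y)))}

/-- The region `R_{22}` (wiretap coding not available at Encoder 1). -/
def regionR22 (p : O7 U1 U2 A1 A2 AS AY AZ → ℝ) : Set (ℝ × ℝ) :=
  {R | 0 ≤ R.1 ∧ 0 ≤ R.2 ∧ ∃ r11 r12 r21 r22 : ℝ,
    0 ≤ r11 ∧ 0 ≤ r12 ∧ 0 ≤ r21 ∧ 0 ≤ r22 ∧
    r11 + r12 + r21 + r22 ≤ Hc p (fun ω => ω.s) (fun ω => (ω.z, ω.u1)) ∧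
    Hc p (fun ω => ω.s) (fun ω => (ω.y, ω.u1, ω.u2)) ≤ r12 + r22 ∧
    R.1 ≤ min r11 (cMI p (fun ω => ω.u1) (fun ω => ω.y) (fun ω => ω.u2) - r12) ∧
    R.2 ≤ min (cMI p (fun ω => ω.u2) (fun ω => ω.y) (fun ω => ω.u1) -
        cMI p (fun ω => ω.u2) (fun ω => ω.z) (fun ω => (ω.s, ω.u1)) + r21)
      (cMI p (fun ω => ω.u2) (fun ω => ω.y) (fun ω => ω.u1) - r22) ∧
    R.1 + R.2 ≤ min (cMI p (fun ω => ω.u2) (fun ω => ω.y) (fun ω => ω.u1) -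
        cMI p (fun ω => ω.u2) (fun ω => ω.z) (fun ω => (ω.s, ω.u1)) +
        Hc p (fun ω => ω.s) (fun ω => (ω.z, ω.u1)) -
        Hc p (fun ω => ω.s) (fun ω => (ω.u1, ω.u2, ω.y)))
      (MI p (fun ω => (ω.u1, ω.u2)) (fun ω => ω.y) -
        Hc p (fun ω => ω.s) (fun ω => (ω.u1, ω.u2, ω.y)))}

/-- The region `R_{23}` (wiretap coding not available at Encoder 2). -/
def regionR23 (p : O7 U1 U2 A1 A2 AS AY AZ → ℝ) : Set (ℝ × ℝ) :=
  {R | 0 ≤ R.1 ∧ 0 ≤ R.2 ∧ ∃ r11 r12 r21 r22 : ℝ,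
    0 ≤ r11 ∧ 0 ≤ r12 ∧ 0 ≤ r21 ∧ 0 ≤ r22 ∧
    r11 + r12 + r21 + r22 ≤ Hc p (fun ω => ω.s) (fun ω => (ω.z, ω.u2)) ∧
    Hc p (fun ω => ω.s) (fun ω => (ω.y, ω.u1, ω.u2)) ≤ r12 + r22 ∧
    R.1 ≤ min (cMI p (fun ω => ω.u1) (fun ω => ω.y) (fun ω => ω.u2) -
        cMI p (fun ω => ω.u1) (fun ω => ω.z) (fun ω => (ω.s, ω.u2)) + r11)
      (cMI p (fun ω => ω.u1) (fun ω => ω.y) (fun ω => ω.u2) - r12) ∧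
    R.2 ≤ min r21 (cMI p (fun ω => ω.u2) (fun ω => ω.y) (fun ω => ω.u1) - r22) ∧
    R.1 + R.2 ≤ min (cMI p (fun ω => ω.u1) (fun ω => ω.y) (fun ω => ω.u2) -
        cMI p (fun ω => ω.u1) (fun ω => ω.z) (fun ω => (ω.s, ω.u2)) +
        Hc p (fun ω => ω.s) (fun ω => (ω.z, ω.u2)) -
        Hc p (fun ω => ω.s) (fun ω => (ω.u1, ω.u2, ω.y)))
      (MI p (fun ω => (ω.u1, ω.u2)) (fun ω => ω.y) -
        Hc p (fun ω => ω.s) (fun ω => (ω.u1, ω.u2, ω.y)))}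

end AuxR2

/-- The joint law determined by an auxiliary-law datum for Coding scheme 2. -/
def AuxLawR2.joint (L : AuxLawR2 A1 A2 AS AY AZ) (PS : AS → ℝ)
    (W : A1 → A2 → AS → AY × AZ → ℝ) : O7 L.U1 L.U2 A1 A2 AS AY AZ → ℝ :=
  jointR2 PS W L.PU1 L.PU2 L.PX1 L.PX2

/-- The region `R_2` of Theorem 2: the convex hull of the union, over all auxiliary
joint laws, of `R_{21} ∪ R_{22} ∪ R_{23}`. -/
def RegionR2 (PS : AS → ℝ) (W : A1 → A2 → AS → AY × AZ → ℝ) : Set (ℝ × ℝ) :=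
  convexHull ℝ {R | ∃ L : AuxLawR2 A1 A2 AS AY AZ,
    R ∈ regionR21 (L.joint PS W) ∪ regionR22 (L.joint PS W) ∪ regionR23 (L.joint PS W)}

/-- The Bernoulli(`p`) state pmf on `Bool` (`true` has probability `p`). -/
def PSp (p : ℝ) : Bool → ℝ := fun s => if s then p else 1 - p

/-- The deterministic channel of Example 1, second model: `Y = X1 ⊕ X2 ⊕ S` and
`Z = X2`. -/
def Wex2 : Bool → Bool → Bool → Bool × Bool → ℝ :=
  fun x1 x2 s yz => if yz.1 = Bool.xor x1 (Bool.xor x2 s) ∧ yz.2 = x2 then 1 else 0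

/-! ### Entropy of random variables on a finite space -/

section Entropy
set_option linter.unusedSectionVars false
variable {Ω α β γ δ : Type} [Fintype Ω] [Fintype α] [Fintype β] [Fintype γ] [Fintype δ]
  [DecidableEq α] [DecidableEq β] [DecidableEq γ] [DecidableEq δ]

lemma law_nonneg {p : Ω → ℝ} (hp : ∀ ω, 0 ≤ p ω) (X : Ω → α) (a : α) : 0 ≤ law p X a :=
  Finset.sum_nonneg fun ω _ => by split_ifs <;> simp [hp]

lemma law_pos {p : Ω → ℝ} (hp : ∀ ω, 0 ≤ p ω) (X : Ω → α) {ω : Ω} (h : p ω ≠ 0) :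
    0 < law p X (X ω) := by
  have h1 : (if X ω = X ω then p ω else 0) ≤ law p X (X ω) :=
    Finset.single_le_sum (f := fun ω' => if X ω' = X ω then p ω' else 0)
      (fun i _ => by split_ifs <;> simp [hp]) (Finset.mem_univ ω)
  rw [if_pos rfl] at h1
  exact lt_of_lt_of_le (lt_of_le_of_ne (hp ω) (Ne.symm h)) h1

lemma sum_law (p : Ω → ℝ) (X : Ω → α) (f : α → ℝ) :
    ∑ a, law p X a * f a = ∑ ω, p ω * f (X ω) := by
  simp only [law, Finset.sum_mul]
  rw [Finset.sum_comm]
  refine Finset.sum_congr rfl fun ω _ => ?_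
  simp [ite_mul]

/-- Entropy as the expected surprisal on the sample space. -/
lemma H_eq (p : Ω → ℝ) (X : Ω → α) :
    H p X = -∑ ω, p ω * Real.logb 2 (law p X (X ω)) := by
  unfold H ent
  rw [sum_law p X (fun a => Real.logb 2 (law p X a))]

lemma law_marg_fst (p : Ω → ℝ) (X : Ω → α) (Z : Ω → γ) (z : γ) :
    ∑ x, law p (fun ω => (X ω, Z ω)) (x, z) = law p Z z := by
  simp only [law]
  rw [Finset.sum_comm]
  refine Finset.sum_congr rfl fun ω _ => ?_
  by_cases h : Z ω = z <;> simp [h]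

lemma law_marg_mid (p : Ω → ℝ) (X : Ω → α) (Y : Ω → β) (Z : Ω → γ) (x : α) (z : γ) :
    ∑ y, law p (fun ω => (X ω, Y ω, Z ω)) (x, y, z) = law p (fun ω => (X ω, Z ω)) (x, z) := by
  simp only [law]
  rw [Finset.sum_comm]
  refine Finset.sum_congr rfl fun ω _ => ?_
  by_cases h : Z ω = z <;> by_cases h' : X ω = x <;> simp [h, h']

/-- Entropy depends only on the partition that the variable induces on the support. -/
lemma H_congr (p : Ω → ℝ) (X : Ω → α) (Y : Ω → β)
    (h : ∀ ω ω', p ω ≠ 0 → p ω' ≠ 0 → (X ω = X ω' ↔ Y ω = Y ω')) : H p X = H p Y := by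
  rw [H_eq, H_eq]
  congr 1
  refine Finset.sum_congr rfl fun ω _ => ?_
  by_cases h0 : p ω = 0
  · simp [h0]
  congr 2
  refine Finset.sum_congr rfl fun ω' _ => ?_
  by_cases h1 : p ω' = 0
  · simp [h1]
  · simp only [h ω' ω h1 h0]

/-- Submodularity of entropy, i.e. `I(X;Y|Z) ≥ 0`; Gibbs' inequality `log t ≥ 1 - 1/t`. -/
lemma H_submod {p : Ω → ℝ} (hp : ∀ ω, 0 ≤ p ω) (X : Ω → α) (Y : Ω → β) (Z : Ω → γ) :
    H p (fun ω => (X ω, Y ω, Z ω)) + H p Z ≤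
      H p (fun ω => (X ω, Z ω)) + H p (fun ω => (Y ω, Z ω)) := by
  set A := law p (fun ω => (X ω, Y ω, Z ω)) with hA
  set B := law p (fun ω => (X ω, Z ω)) with hB
  set C := law p (fun ω => (Y ω, Z ω)) with hC
  set D := law p Z with hD
  have key : ∑ ω, p ω * (B (X ω, Z ω) * C (Y ω, Z ω) / (A (X ω, Y ω, Z ω) * D (Z ω)))
      ≤ ∑ ω, p ω := by
    have e1 := sum_law p (fun ω => (X ω, Y ω, Z ω))
      (fun t => B (t.1, t.2.2) * C (t.2.1, t.2.2) / (A t * D t.2.2))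
    have e2 : ∑ z, D z = ∑ ω, p ω := by simpa using sum_law p Z (fun _ => 1)
    rw [← e1, ← e2]
    calc _ ≤ ∑ t : α × β × γ, B (t.1, t.2.2) * C (t.2.1, t.2.2) / D t.2.2 := by
          refine Finset.sum_le_sum fun t _ => ?_
          have hnn : 0 ≤ B (t.1, t.2.2) * C (t.2.1, t.2.2) / D t.2.2 :=
            div_nonneg (mul_nonneg (law_nonneg hp _ _) (law_nonneg hp _ _)) (law_nonneg hp _ _)
          rw [← hA]
          by_cases h : A t = 0
          · simpa [h] using hnn
          · rw [mul_comm (A t) (D _), ← div_div, mul_div_cancel₀ _ h]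
      _ = ∑ z, D z := by
          rw [Fintype.sum_prod_type]
          simp only [Fintype.sum_prod_type]
          have : ∀ x : α, ∑ y : β, ∑ z : γ, B (x, z) * C (y, z) / D z
              = ∑ z : γ, B (x, z) * D z / D z := by
            intro x
            rw [Finset.sum_comm]
            refine Finset.sum_congr rfl fun z _ => ?_
            rw [← Finset.sum_div, ← Finset.mul_sum, hC, law_marg_fst]
          simp only [this]
          rw [Finset.sum_comm]
          refine Finset.sum_congr rfl fun z _ => ?_
          rw [← Finset.sum_div, ← Finset.sum_mul, hB, law_marg_fst]
          exact mul_self_div_self _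
  have hl2 : 0 < Real.log 2 := Real.log_pos (by norm_num)
  have step : ∀ ω, p ω * ((1 - B (X ω, Z ω) * C (Y ω, Z ω) / (A (X ω, Y ω, Z ω) * D (Z ω)))
        / Real.log 2)
      ≤ p ω * Real.logb 2 (A (X ω, Y ω, Z ω)) + p ω * Real.logb 2 (D (Z ω))
        - p ω * Real.logb 2 (B (X ω, Z ω)) - p ω * Real.logb 2 (C (Y ω, Z ω)) := by
    intro ω
    by_cases h0 : p ω = 0
    · simp [h0]
    have a0 : 0 < A (X ω, Y ω, Z ω) := law_pos hp (fun ω => (X ω, Y ω, Z ω)) h0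
    have b0 : 0 < B (X ω, Z ω) := law_pos hp (fun ω => (X ω, Z ω)) h0
    have c0 : 0 < C (Y ω, Z ω) := law_pos hp (fun ω => (Y ω, Z ω)) h0
    have d0 : 0 < D (Z ω) := law_pos hp Z h0
    have hlog := Real.log_le_sub_one_of_pos
      (show 0 < B (X ω, Z ω) * C (Y ω, Z ω) / (A (X ω, Y ω, Z ω) * D (Z ω)) by positivity)
    rw [Real.log_div (by positivity) (by positivity), Real.log_mul b0.ne' c0.ne',
      Real.log_mul a0.ne' d0.ne'] at hlog
    rw [← mul_add, ← mul_sub, ← mul_sub]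
    refine mul_le_mul_of_nonneg_left ?_ (hp ω)
    simp only [Real.logb]
    rw [← add_div, ← sub_div, ← sub_div]
    exact div_le_div_of_nonneg_right (by linarith) hl2.le
  have hs := Finset.sum_le_sum fun ω (_ : ω ∈ Finset.univ) => step ω
  have h0 : 0 ≤ ∑ ω, p ω * ((1 - B (X ω, Z ω) * C (Y ω, Z ω) /
      (A (X ω, Y ω, Z ω) * D (Z ω))) / Real.log 2) := by
    simp only [← mul_div_assoc]
    rw [← Finset.sum_div]
    refine div_nonneg ?_ hl2.le
    simp only [mul_sub, mul_one, Finset.sum_sub_distrib]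
    linarith
  simp only [Finset.sum_sub_distrib, Finset.sum_add_distrib] at hs
  rw [H_eq, H_eq, H_eq, H_eq]
  linarith

/-- If `Y` is a function of `X` on the support, the law of `Y` dominates that of `X`. -/
lemma law_le_law {p : Ω → ℝ} (hp : ∀ ω, 0 ≤ p ω) (X : Ω → α) (Y : Ω → β) {ω : Ω}
    (h : ∀ ω', p ω' ≠ 0 → X ω' = X ω → Y ω' = Y ω) :
    law p X (X ω) ≤ law p Y (Y ω) := by
  refine Finset.sum_le_sum fun ω' _ => ?_
  by_cases h0 : p ω' = 0
  · simp [h0]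
  by_cases h1 : X ω' = X ω
  · simp [h1, h ω' h0 h1]
  · rw [if_neg h1]
    split_ifs <;> simp [hp]

/-- A function of a random variable has at most its entropy. -/
lemma H_mono {p : Ω → ℝ} (hp : ∀ ω, 0 ≤ p ω) (X : Ω → α) (Y : Ω → β)
    (h : ∀ ω ω', p ω ≠ 0 → p ω' ≠ 0 → X ω = X ω' → Y ω = Y ω') : H p Y ≤ H p X := by
  rw [H_eq, H_eq]
  refine neg_le_neg (Finset.sum_le_sum fun ω _ => ?_)
  by_cases h0 : p ω = 0
  · simp [h0]
  refine mul_le_mul_of_nonneg_left ?_ (hp ω)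
  exact Real.logb_le_logb_of_le (by norm_num) (law_pos hp X h0)
    (law_le_law hp X Y fun ω' h1 h2 => h ω' ω h1 h0 h2)

/-- If `H(X|Y) ≤ 0` then `X` is a function of `Y` on the support. -/
lemma eq_of_Hc_nonpos {p : Ω → ℝ} (hp : ∀ ω, 0 ≤ p ω) (X : Ω → α) (Y : Ω → β)
    (h : H p (fun ω => (X ω, Y ω)) ≤ H p Y) {ω ω' : Ω} (h0 : p ω ≠ 0) (h1 : p ω' ≠ 0)
    (hY : Y ω = Y ω') : X ω = X ω' := by
  by_contra hX
  have hlt : law p (fun ω => (X ω, Y ω)) (X ω, Y ω) < law p Y (Y ω) := by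
    refine Finset.sum_lt_sum (fun τ _ => ?_) ⟨ω', Finset.mem_univ _, ?_⟩
    · by_cases h2 : Y τ = Y ω <;> by_cases h3 : X τ = X ω <;> simp [h2, h3, hp]
    · have h4 : ¬ (X ω' = X ω) := fun e => hX e.symm
      simpa [h4, hY] using lt_of_le_of_ne (hp ω') (Ne.symm h1)
  rw [H_eq, H_eq] at h
  have : ∑ ω, p ω * Real.logb 2 (law p (fun ω => (X ω, Y ω)) (X ω, Y ω)) <
      ∑ ω, p ω * Real.logb 2 (law p Y (Y ω)) := by
    refine Finset.sum_lt_sum (fun τ _ => ?_) ⟨ω, Finset.mem_univ _, ?_⟩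
    · by_cases h2 : p τ = 0
      · simp [h2]
      refine mul_le_mul_of_nonneg_left ?_ (hp τ)
      refine Real.logb_le_logb_of_le (by norm_num) (law_pos hp (fun ω => (X ω, Y ω)) h2) ?_
      refine law_le_law hp (fun ω => (X ω, Y ω)) Y fun τ' _ h4 => ?_
      exact (Prod.ext_iff.1 h4).2
    · exact mul_lt_mul_of_pos_left
        (Real.logb_lt_logb (by norm_num) (law_pos hp (fun ω => (X ω, Y ω)) h0) hlt)
        (lt_of_le_of_ne (hp ω) (Ne.symm h0))
  linarith

/-- If the law of `(X,Y,Z)` factors as `a(x,z) b(y,z)`, then `I(X;Y|Z) = 0`. -/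
lemma H_of_factor {p : Ω → ℝ} (hp : ∀ ω, 0 ≤ p ω) (X : Ω → α) (Y : Ω → β) (Z : Ω → γ)
    (a : α → γ → ℝ) (b : β → γ → ℝ)
    (h : ∀ x y z, law p (fun ω => (X ω, Y ω, Z ω)) (x, y, z) = a x z * b y z) :
    H p (fun ω => (X ω, Y ω, Z ω)) + H p Z =
      H p (fun ω => (X ω, Z ω)) + H p (fun ω => (Y ω, Z ω)) := by
  have hB : ∀ x z, law p (fun ω => (X ω, Z ω)) (x, z) = a x z * ∑ y, b y z := by
    intro x z
    rw [← law_marg_mid p X Y Z]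
    simp only [h, Finset.mul_sum]
  have hC : ∀ y z, law p (fun ω => (Y ω, Z ω)) (y, z) = (∑ x, a x z) * b y z := by
    intro y z
    rw [← law_marg_fst p X (fun ω => (Y ω, Z ω))]
    simp only [h, Finset.sum_mul]
  have hD : ∀ z, law p Z z = (∑ x, a x z) * ∑ y, b y z := by
    intro z
    rw [← law_marg_fst p X Z]
    simp only [hB, Finset.sum_mul]
  rw [H_eq, H_eq, H_eq, H_eq]
  rw [← neg_add, ← neg_add, ← Finset.sum_add_distrib, ← Finset.sum_add_distrib]
  congr 1
  refine Finset.sum_congr rfl fun ω _ => ?_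
  by_cases h0 : p ω = 0
  · simp [h0]
  have a0 := law_pos hp (fun ω => (X ω, Y ω, Z ω)) h0
  have b0 := law_pos hp (fun ω => (X ω, Z ω)) h0
  have c0 := law_pos hp (fun ω => (Y ω, Z ω)) h0
  have d0 := law_pos hp Z h0
  rw [← mul_add, ← mul_add, ← Real.logb_mul a0.ne' d0.ne', ← Real.logb_mul b0.ne' c0.ne']
  rw [h, hB, hC, hD]
  congr 2
  ring

/-- A marginal as an explicit sum, given coordinates `f` on `Ω` whose first one is `X`. -/
lemma law_of_equiv {κ : Type} [Fintype κ] (p : Ω → ℝ) (X : Ω → α) (f : α × κ ≃ Ω) (hf : ∀ a b, X (f (a, b)) = a)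
    (a : α) : law p X a = ∑ b, p (f (a, b)) := by
  unfold law
  rw [← f.sum_comp, Fintype.sum_prod_type, Finset.sum_eq_single a]
  · simp [hf]
  · intro a' _ h
    simp [hf, h]
  · simp

lemma H_law [DecidableEq Ω] (q : δ → ℝ) (f : δ → Ω) (X : Ω → α) :
    H (law q f) X = H q (fun d => X (f d)) := by
  unfold H
  congr 1
  funext a
  simp only [law]
  have : ∀ ω, (if X ω = a then ∑ d, if f d = ω then q d else 0 else 0)
      = ∑ d, if f d = ω then (if X (f d) = a then q d else 0) else 0 := by
    intro ω
    split_ifs with h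
    · refine Finset.sum_congr rfl fun d _ => ?_
      by_cases h' : f d = ω <;> simp [h', h]
    · symm
      refine Finset.sum_eq_zero fun d _ => ?_
      by_cases h' : f d = ω <;> simp [h', h]
  simp only [this]
  rw [Finset.sum_comm]
  simp

/-- Submodularity for four variables: `P` and `Q` together determine `T`, and each of them
determines `Z`. -/
lemma H_submod' {p : Ω → ℝ} (hp : ∀ ω, 0 ≤ p ω) (T : Ω → δ) (Z : Ω → γ) (P : Ω → α)
    (Q : Ω → β)
    (hT : ∀ ω ω', p ω ≠ 0 → p ω' ≠ 0 → P ω = P ω' → Q ω = Q ω' → T ω = T ω')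
    (hP : ∀ ω ω', p ω ≠ 0 → p ω' ≠ 0 → P ω = P ω' → Z ω = Z ω')
    (hQ : ∀ ω ω', p ω ≠ 0 → p ω' ≠ 0 → Q ω = Q ω' → Z ω = Z ω') :
    H p T + H p Z ≤ H p P + H p Q := by
  have h1 := H_submod hp P Q Z
  have h2 : H p T ≤ H p (fun ω => (P ω, Q ω, Z ω)) := H_mono hp _ _ fun ω ω' a b e => by
    simp only [Prod.mk.injEq] at e
    exact hT ω ω' a b e.1 e.2.1
  have h3 : H p (fun ω => (P ω, Z ω)) = H p P := H_congr p _ _ fun ω ω' a b => by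
    simp only [Prod.mk.injEq]
    exact ⟨fun e => e.1, fun e => ⟨e, hP ω ω' a b e⟩⟩
  have h4 : H p (fun ω => (Q ω, Z ω)) = H p Q := H_congr p _ _ fun ω ω' a b => by
    simp only [Prod.mk.injEq]
    exact ⟨fun e => e.1, fun e => ⟨e, hQ ω ω' a b e⟩⟩
  linarith

end Entropy

/-! ### Consequences of the Markov structure of Coding scheme 1 -/

/-- The entropic content of an admissible joint law of Coding scheme 1 for the channel
`Y = X1 ⊕ X2 ⊕ S`, `Z = X2`: the three conditional independences
`(U1,X1) ⊥ (U2,X2) | (S,U)`, `U2 ⊥ (S,V,U1) | U`, `V ⊥ (U,U1,U2,Y) | S`, each written as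
an identity between entropies, together with the deterministic channel and a full-support
state of entropy `h`. -/
structure Scheme1 {Ω V U U1 U2 : Type} [Fintype Ω] [Fintype V] [Fintype U] [Fintype U1]
    [Fintype U2] [DecidableEq V] [DecidableEq U] [DecidableEq U1] [DecidableEq U2]
    (p : Ω → ℝ) (h : ℝ) (v : Ω → V) (u : Ω → U) (u1 : Ω → U1) (u2 : Ω → U2)
    (x1 x2 s y z : Ω → Bool) : Prop where
  nonneg : ∀ ω, 0 ≤ p ω
  indepX : H p (fun ω => ((u1 ω, x1 ω), (u2 ω, x2 ω), (s ω, u ω))) + H p (fun ω => (s ω, u ω)) =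
    H p (fun ω => ((u1 ω, x1 ω), (s ω, u ω))) + H p (fun ω => ((u2 ω, x2 ω), (s ω, u ω)))
  indepU : H p (fun ω => (u2 ω, (s ω, v ω, u1 ω), u ω)) + H p u =
    H p (fun ω => (u2 ω, u ω)) + H p (fun ω => ((s ω, v ω, u1 ω), u ω))
  indepV : H p (fun ω => (v ω, (u ω, u1 ω, u2 ω, y ω), s ω)) + H p s =
    H p (fun ω => (v ω, s ω)) + H p (fun ω => ((u ω, u1 ω, u2 ω, y ω), s ω))
  outY : ∀ ω, p ω ≠ 0 → y ω = Bool.xor (x1 ω) (Bool.xor (x2 ω) (s ω))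
  outZ : ∀ ω, p ω ≠ 0 → z ω = x2 ω
  entS : H p s = h
  supp : ∀ b, ∃ ω, p ω ≠ 0 ∧ s ω = b

namespace Scheme1
variable {Ω V U U1 U2 : Type} [Fintype Ω] [Fintype V] [Fintype U] [Fintype U1]
  [Fintype U2] [DecidableEq V] [DecidableEq U] [DecidableEq U1] [DecidableEq U2]
  {p : Ω → ℝ} {h : ℝ} {v : Ω → V} {u : Ω → U} {u1 : Ω → U1} {u2 : Ω → U2}
  {x1 x2 s y z : Ω → Bool}

/-- `I(U2;Y|S,U,U1) ≤ I(U2;Z|S,U,U1)`: given `(S,U,U1)` the output `Y` is a function of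
`(X1,X2)`, and `X1` is independent of `(U2,X2)`. -/
lemma cMI_y_le_cMI_z (A : Scheme1 p h v u u1 u2 x1 x2 s y z) :
    cMI p u2 y (fun ω => (s ω, u ω, u1 ω)) ≤ cMI p u2 z (fun ω => (s ω, u ω, u1 ω)) := by
  have hp := A.nonneg
  have hy := A.outY
  have hz := A.outZ
  have i := A.indepX
  unfold cMI Hc
  have a1 := H_submod' hp (fun ω => (u2 ω, x1 ω, x2 ω, s ω, u ω, u1 ω))
    (fun ω => (y ω, s ω, u ω, u1 ω)) (fun ω => (u2 ω, y ω, s ω, u ω, u1 ω))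
    (fun ω => (x1 ω, x2 ω, s ω, u ω, u1 ω)) (by grind) (by grind) (by grind)
  have a2 := H_submod' hp (fun ω => (x1 ω, x2 ω, s ω, u ω, u1 ω))
    (fun ω => (s ω, u ω, u1 ω)) (fun ω => ((u1 ω, x1 ω), (s ω, u ω)))
    (fun ω => (z ω, s ω, u ω, u1 ω)) (by grind) (by grind) (by grind)
  have a3 := H_submod' hp (fun ω => (u2 ω, z ω, s ω, u ω, u1 ω))
    (fun ω => (s ω, u ω)) (fun ω => (s ω, u ω, u1 ω))
    (fun ω => ((u2 ω, x2 ω), (s ω, u ω))) (by grind) (by grind) (by grind)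
  have a4 : H p (fun ω => ((u1 ω, x1 ω), (u2 ω, x2 ω), (s ω, u ω))) =
    H p (fun ω => (u2 ω, x1 ω, x2 ω, s ω, u ω, u1 ω)) := H_congr p _ _ (by grind)
  linarith

/-- `I(U2;Z|S,U,U1) ≤ I(U2;Z|S,U)`, as `U1` is independent of `(U2,X2)` given `(S,U)`. -/
lemma cMI_z_le (A : Scheme1 p h v u u1 u2 x1 x2 s y z) :
    cMI p u2 z (fun ω => (s ω, u ω, u1 ω)) ≤ cMI p u2 z (fun ω => (s ω, u ω)) := by
  have hp := A.nonneg
  have hz := A.outZ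
  have i := A.indepX
  unfold cMI Hc
  have a1 := H_submod' hp (fun ω => (u2 ω, s ω, u ω, u1 ω))
    (fun ω => (s ω, u ω)) (fun ω => (u2 ω, s ω, u ω))
    (fun ω => (s ω, u ω, u1 ω)) (by grind) (by grind) (by grind)
  have a2 := H_submod' hp (fun ω => (z ω, s ω, u ω, u1 ω))
    (fun ω => (s ω, u ω)) (fun ω => (z ω, s ω, u ω))
    (fun ω => (s ω, u ω, u1 ω)) (by grind) (by grind) (by grind)
  have a3 := H_submod' hp (fun ω => ((u1 ω, x1 ω), (u2 ω, x2 ω), (s ω, u ω)))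
    (fun ω => (s ω, u ω, u1 ω)) (fun ω => ((u1 ω, x1 ω), (s ω, u ω)))
    (fun ω => (u2 ω, z ω, s ω, u ω, u1 ω)) (by grind) (by grind) (by grind)
  have a4 : H p (fun ω => ((u2 ω, x2 ω), (s ω, u ω))) =
    H p (fun ω => (u2 ω, z ω, s ω, u ω)) := H_congr p _ _ (by grind)
  linarith

/-- `I(U2;Y|V,U,U1) ≤ I(U2;Y,S|V,U,U1) = I(U2;Y|S,U,U1)`. -/
lemma cMI_v_le_cMI_s (A : Scheme1 p h v u u1 u2 x1 x2 s y z) :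
    cMI p u2 y (fun ω => (v ω, u ω, u1 ω)) ≤ cMI p u2 y (fun ω => (s ω, u ω, u1 ω)) := by
  have hp := A.nonneg
  have i := A.indepU
  have j := A.indepV
  unfold cMI Hc
  have a1 := H_submod' hp (fun ω => (v ω, u2 ω, y ω, s ω, u ω, u1 ω))
    (fun ω => (y ω, v ω, u ω, u1 ω)) (fun ω => (u2 ω, y ω, v ω, u ω, u1 ω))
    (fun ω => (v ω, y ω, s ω, u ω, u1 ω)) (by grind) (by grind) (by grind)
  have a2 := H_submod' hp (fun ω => (v ω, (u ω, u1 ω, u2 ω, y ω), s ω))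
    (fun ω => (u2 ω, y ω, s ω, u ω, u1 ω)) (fun ω => (v ω, u2 ω, y ω, s ω, u ω, u1 ω))
    (fun ω => ((u ω, u1 ω, u2 ω, y ω), s ω)) (by grind) (by grind) (by grind)
  have a3 := H_submod' hp (fun ω => (v ω, y ω, s ω, u ω, u1 ω)) s
    (fun ω => (v ω, s ω)) (fun ω => (y ω, s ω, u ω, u1 ω)) (by grind) (by grind) (by grind)
  have a4 := H_submod' hp (fun ω => (u2 ω, v ω, u ω, u1 ω)) u
    (fun ω => (u2 ω, u ω)) (fun ω => (v ω, u ω, u1 ω)) (by grind) (by grind) (by grind)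
  have a5 := H_submod' hp (fun ω => (u2 ω, (s ω, v ω, u1 ω), u ω))
    (fun ω => (s ω, u ω, u1 ω)) (fun ω => (u2 ω, s ω, u ω, u1 ω))
    (fun ω => ((s ω, v ω, u1 ω), u ω)) (by grind) (by grind) (by grind)
  linarith

/-- `H(V,S) - H(S) + H(S,Y) ≤ H(V,S,Y)`, i.e. `I(V;Y|S) ≤ 0`. -/
lemma H_vsy (A : Scheme1 p h v u u1 u2 x1 x2 s y z) :
    H p (fun ω => (v ω, s ω)) - h + H p (fun ω => (s ω, y ω)) ≤
      H p (fun ω => (v ω, s ω, y ω)) := by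
  have j := A.indepV
  have k := A.entS
  have a1 := H_submod' A.nonneg (fun ω => (v ω, (u ω, u1 ω, u2 ω, y ω), s ω))
    (fun ω => (s ω, y ω)) (fun ω => (v ω, s ω, y ω))
    (fun ω => ((u ω, u1 ω, u2 ω, y ω), s ω)) (by grind) (by grind) (by grind)
  linarith

/-- `I(V;Y) ≤ I(V;S) = h - H(S|V)`. -/
lemma MI_vy_le (A : Scheme1 p h v u u1 u2 x1 x2 s y z) :
    MI p v y ≤ h - (H p (fun ω => (v ω, s ω)) - H p v) := by
  have a1 := H_submod' A.nonneg (fun ω => (v ω, s ω, y ω)) y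
    (fun ω => (v ω, y ω)) (fun ω => (s ω, y ω)) (by grind) (by grind) (by grind)
  have a2 := A.H_vsy
  unfold MI
  linarith

lemma MI_vy_le_h (A : Scheme1 p h v u u1 u2 x1 x2 s y z) : MI p v y ≤ h := by
  have a1 := A.MI_vy_le
  have a2 := H_mono A.nonneg (fun ω => (v ω, s ω)) v (by grind)
  linarith

/-- If `I(V;Y)` attains its maximal value `h`, then `S` is a function of `V` and also of `Y`.
Both `S` and `Y` being binary and `S` having full support, `Y` is then a function of `S`, hence
of `V`, and `I(U2;Y|V,U,U1)` vanishes. -/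
lemma cMI_nonpos_of_le_MI (A : Scheme1 p h v u u1 u2 x1 x2 s y z) (hI : h ≤ MI p v y) :
    cMI p u2 y (fun ω => (v ω, u ω, u1 ω)) ≤ 0 := by
  have hp := A.nonneg
  have a1 := A.MI_vy_le
  have a2 := A.H_vsy
  have sv : H p (fun ω => (v ω, s ω)) ≤ H p v := by linarith
  have a3 := H_submod' hp (fun ω => (v ω, s ω, y ω)) v
    (fun ω => (v ω, s ω)) (fun ω => (v ω, y ω)) (by grind) (by grind) (by grind)
  have a4 := H_mono hp (fun ω => (v ω, s ω)) v (by grind)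
  have sy : H p (fun ω => (s ω, y ω)) ≤ H p y := by
    unfold MI at hI
    linarith
  have fy : ∀ ω ω', p ω ≠ 0 → p ω' ≠ 0 → s ω = s ω' → y ω = y ω' := by
    intro ω ω' h0 h1 e
    by_contra hne
    obtain ⟨τ, h2, hτ⟩ := A.supp (!(s ω))
    -- the third point `τ` shares its value of `y` with `ω` or with `ω'`
    have e1 := fun q => eq_of_Hc_nonpos hp s y sy (ω := τ) (ω' := ω) h2 h0 q
    have e2 := fun q => eq_of_Hc_nonpos hp s y sy (ω := τ) (ω' := ω') h2 h1 q
    have bool : ∀ a b c a' b' c' : Bool, a' = b' → a ≠ b → c' = !a' → (c = a → c' = a') →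
        (c = b → c' = b') → False := by decide
    exact bool _ _ _ _ _ _ e hne hτ e1 e2
  have b1 := H_submod' hp (fun ω => (y ω, v ω, u ω, u1 ω)) v
    (fun ω => (v ω, s ω)) (fun ω => (v ω, u ω, u1 ω)) (by grind) (by grind) (by grind)
  have b2 := H_mono hp (fun ω => (u2 ω, y ω, v ω, u ω, u1 ω))
    (fun ω => (u2 ω, v ω, u ω, u1 ω)) (by grind)
  unfold cMI Hc
  linarith

lemma rate_lt (A : Scheme1 p h v u u1 u2 x1 x2 s y z) (h0 : 0 < h) {R : ℝ}
    (hV : R ≤ MI p v y) (hU : R ≤ cMI p u2 y (fun ω => (v ω, u ω, u1 ω))) : R < h := by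
  by_contra hR
  have := A.cMI_nonpos_of_le_MI (by linarith)
  linarith

end Scheme1

/-! ### Marginals of the joint law of Coding scheme 1 -/

section Joint
variable (L : AuxLawR1 Bool Bool Bool Bool Bool)

lemma PSp_nonneg {p : ℝ} (hp0 : 0 < p) (hp1 : p < 1) (b : Bool) : 0 ≤ PSp p b := by
  cases b <;> simp [PSp] <;> linarith

lemma joint_nonneg {p : ℝ} (hp0 : 0 < p) (hp1 : p < 1) (ω) :
    0 ≤ L.joint (PSp p) Wex2 ω := by
  have hW : 0 ≤ Wex2 ω.x1 ω.x2 ω.s (ω.y, ω.z) := by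
    unfold Wex2
    split_ifs <;> norm_num
  have h1 := PSp_nonneg hp0 hp1 ω.s
  have h2 := (L.hPV ω.s).1 ω.v
  have h3 := L.hPU.1 ω.u
  have h4 := (L.hPU1 ω.u).1 ω.u1
  have h5 := (L.hPU2 ω.u).1 ω.u2
  have h6 := (L.hPX1 ω.u ω.u1 ω.s).1 ω.x1
  have h7 := (L.hPX2 ω.u ω.u2 ω.s).1 ω.x2
  unfold AuxLawR1.joint jointR1
  positivity

lemma Wex2_sum (a b s : Bool) (c : ℝ) :
    ∑ y : Bool, ∑ z : Bool, c * Wex2 a b s (y, z) = c := by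
  cases a <;> cases b <;> cases s <;> simp [Wex2]

lemma joint_law_X (p : ℝ) (k1 : L.U1 × Bool) (k2 : L.U2 × Bool) (k : Bool × L.U) :
    law (L.joint (PSp p) Wex2)
      (fun ω => ((ω.u1, ω.x1), (ω.u2, ω.x2), (ω.s, ω.u))) (k1, k2, k) =
    (PSp p k.1 * L.PU k.2 * L.PU1 k.2 k1.1 * L.PX1 k.2 k1.1 k.1 k1.2) *
      (L.PU2 k.2 k2.1 * L.PX2 k.2 k2.1 k.1 k2.2) := by
  rw [law_of_equiv (κ := L.V × Bool × Bool) _ _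
    (f := ⟨fun t => (t.2.1, t.1.2.2.2, t.1.1.1, t.1.2.1.1, t.1.1.2, t.1.2.1.2, t.1.2.2.1,
        t.2.2.1, t.2.2.2),
      fun ω : O9 L.V L.U L.U1 L.U2 Bool Bool Bool Bool Bool =>
        (((ω.u1, ω.x1), (ω.u2, ω.x2), (ω.s, ω.u)), (ω.v, ω.y, ω.z)),
      fun _ => rfl, fun _ => rfl⟩) (fun _ _ => rfl)]
  simp only [Equiv.coe_fn_mk, AuxLawR1.joint, jointR1, O9.v, O9.u, O9.u1, O9.u2, O9.x1, O9.x2,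
    O9.s, O9.y, O9.z, Fintype.sum_prod_type, Wex2_sum]
  have := (L.hPV k.1).2
  simp only [← Finset.sum_mul, ← Finset.mul_sum, this]
  ring

lemma joint_law_U (p : ℝ) (a : L.U2) (b : Bool × L.V × L.U1) (c : L.U) :
    law (L.joint (PSp p) Wex2)
      (fun ω => (ω.u2, (ω.s, ω.v, ω.u1), ω.u)) (a, b, c) =
    L.PU2 c a * (PSp p b.1 * L.PV b.1 b.2.1 * L.PU c * L.PU1 c b.2.2) := by
  rw [law_of_equiv (κ := Bool × Bool × Bool × Bool) _ _
    (f := ⟨fun t => (t.1.2.1.2.1, t.1.2.2, t.1.2.1.2.2, t.1.1, t.2.1, t.2.2.1, t.1.2.1.1,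
        t.2.2.2.1, t.2.2.2.2),
      fun ω : O9 L.V L.U L.U1 L.U2 Bool Bool Bool Bool Bool =>
        ((ω.u2, (ω.s, ω.v, ω.u1), ω.u), (ω.x1, ω.x2, ω.y, ω.z)),
      fun _ => rfl, fun _ => rfl⟩) (fun _ _ => rfl)]
  simp only [Equiv.coe_fn_mk, AuxLawR1.joint, jointR1, O9.v, O9.u, O9.u1, O9.u2, O9.x1, O9.x2,
    O9.s, O9.y, O9.z, Fintype.sum_prod_type, Wex2_sum]
  have h1 := (L.hPX1 c b.2.2 b.1).2
  have h2 := (L.hPX2 c a b.1).2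
  simp only [← Finset.mul_sum, h2, mul_one, h1]
  ring

lemma joint_law_V (p : ℝ) (a : L.V) (b : L.U × L.U1 × L.U2 × Bool) (c : Bool) :
    law (L.joint (PSp p) Wex2)
      (fun ω => (ω.v, (ω.u, ω.u1, ω.u2, ω.y), ω.s)) (a, b, c) =
    L.PV c a * ∑ t : Bool × Bool × Bool, PSp p c * L.PU b.1 * L.PU1 b.1 b.2.1 *
      L.PU2 b.1 b.2.2.1 * L.PX1 b.1 b.2.1 c t.1 * L.PX2 b.1 b.2.2.1 c t.2.1 *
      Wex2 t.1 t.2.1 c (b.2.2.2, t.2.2) := by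
  rw [law_of_equiv (κ := Bool × Bool × Bool) _ _
    (f := ⟨fun t => (t.1.1, t.1.2.1.1, t.1.2.1.2.1, t.1.2.1.2.2.1, t.2.1, t.2.2.1, t.1.2.2,
        t.1.2.1.2.2.2, t.2.2.2),
      fun ω : O9 L.V L.U L.U1 L.U2 Bool Bool Bool Bool Bool =>
        ((ω.v, (ω.u, ω.u1, ω.u2, ω.y), ω.s), (ω.x1, ω.x2, ω.z)),
      fun _ => rfl, fun _ => rfl⟩) (fun _ _ => rfl)]
  rw [Finset.mul_sum]
  refine Finset.sum_congr rfl fun t _ => ?_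
  simp only [Equiv.coe_fn_mk, AuxLawR1.joint, jointR1, O9.v, O9.u, O9.u1, O9.u2, O9.x1, O9.x2,
    O9.s, O9.y, O9.z]
  ring

lemma joint_law_S (p : ℝ) (c : Bool) :
    law (L.joint (PSp p) Wex2) (fun ω => ω.s) c = PSp p c := by
  rw [law_of_equiv (κ := L.V × L.U × L.U1 × L.U2 × Bool × Bool × Bool × Bool) _ _
    (f := ⟨fun t => (t.2.1, t.2.2.1, t.2.2.2.1, t.2.2.2.2.1, t.2.2.2.2.2.1, t.2.2.2.2.2.2.1,
        t.1, t.2.2.2.2.2.2.2.1, t.2.2.2.2.2.2.2.2),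
      fun ω : O9 L.V L.U L.U1 L.U2 Bool Bool Bool Bool Bool =>
        (ω.s, (ω.v, ω.u, ω.u1, ω.u2, ω.x1, ω.x2, ω.y, ω.z)),
      fun _ => rfl, fun _ => rfl⟩) (fun _ _ => rfl)]
  simp only [Equiv.coe_fn_mk, AuxLawR1.joint, jointR1, O9.v, O9.u, O9.u1, O9.u2, O9.x1, O9.x2,
    O9.s, O9.y, O9.z, Fintype.sum_prod_type, Wex2_sum]
  have h1 := fun u u1 => (L.hPX1 u u1 c).2
  have h2 := fun u u2 => (L.hPX2 u u2 c).2
  have h3 := fun u => (L.hPU1 u).2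
  have h4 := fun u => (L.hPU2 u).2
  simp only [← Finset.mul_sum, h1, h2, mul_one, h4, h3, L.hPU.2, (L.hPV c).2]

lemma ent_PSp (p : ℝ) : ent (PSp p) = hb p := by
  simp [ent, PSp, hb]
  ring

lemma joint_scheme1 {p : ℝ} (hp0 : 0 < p) (hp1 : p < 1) :
    Scheme1 (L.joint (PSp p) Wex2) (hb p) (fun ω => ω.v) (fun ω => ω.u) (fun ω => ω.u1)
      (fun ω => ω.u2) (fun ω => ω.x1) (fun ω => ω.x2) (fun ω => ω.s) (fun ω => ω.y)
      (fun ω => ω.z) := by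
  have hn := joint_nonneg L hp0 hp1
  have hW : ∀ ω, L.joint (PSp p) Wex2 ω ≠ 0 →
      ω.y = Bool.xor ω.x1 (Bool.xor ω.x2 ω.s) ∧ ω.z = ω.x2 := by
    intro ω h
    by_contra hc
    apply h
    have : Wex2 ω.x1 ω.x2 ω.s (ω.y, ω.z) = 0 := if_neg hc
    simp only [AuxLawR1.joint, jointR1, this, mul_zero]
  refine ⟨hn, ?_, ?_, ?_, fun ω h => (hW ω h).1, fun ω h => (hW ω h).2, ?_, fun b => ?_⟩
  · exact H_of_factor hn (fun ω => (ω.u1, ω.x1)) (fun ω => (ω.u2, ω.x2)) (fun ω => (ω.s, ω.u))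
      (fun k1 k => PSp p k.1 * L.PU k.2 * L.PU1 k.2 k1.1 * L.PX1 k.2 k1.1 k.1 k1.2)
      (fun k2 k => L.PU2 k.2 k2.1 * L.PX2 k.2 k2.1 k.1 k2.2) (joint_law_X L p)
  · exact H_of_factor hn (fun ω => ω.u2) (fun ω => (ω.s, ω.v, ω.u1)) (fun ω => ω.u)
      (fun a c => L.PU2 c a)
      (fun b c => PSp p b.1 * L.PV b.1 b.2.1 * L.PU c * L.PU1 c b.2.2) (joint_law_U L p)
  · exact H_of_factor hn (fun ω => ω.v) (fun ω => (ω.u, ω.u1, ω.u2, ω.y)) (fun ω => ω.s)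
      (fun a c => L.PV c a)
      (fun b c => ∑ t : Bool × Bool × Bool, PSp p c * L.PU b.1 * L.PU1 b.1 b.2.1 *
        L.PU2 b.1 b.2.2.1 * L.PX1 b.1 b.2.1 c t.1 * L.PX2 b.1 b.2.2.1 c t.2.1 *
        Wex2 t.1 t.2.1 c (b.2.2.2, t.2.2)) (joint_law_V L p)
  · unfold H
    rw [funext (joint_law_S L p), ent_PSp]
  · have h1 : law (L.joint (PSp p) Wex2) (fun ω => ω.s) b ≠ 0 := by
      rw [joint_law_S]
      cases b <;> simp [PSp] <;> linarith
    obtain ⟨ω, -, h2⟩ := Finset.exists_ne_zero_of_sum_ne_zero h1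
    by_cases h3 : ω.s = b
    · exact ⟨ω, by simpa [h3] using h2, h3⟩
    · simp [h3] at h2

lemma hb_pos {p : ℝ} (hp0 : 0 < p) (hp1 : p < 1) : 0 < hb p := by
  have h1 : Real.logb 2 p < 0 := Real.logb_neg (by norm_num) hp0 hp1
  have h2 : Real.logb 2 (1 - p) < 0 := Real.logb_neg (by norm_num) (by linarith) (by linarith)
  have h3 := mul_neg_of_pos_of_neg hp0 h1
  have h4 := mul_neg_of_pos_of_neg (show 0 < 1 - p by linarith) h2
  unfold hb
  linarith

lemma MI_nonneg {Ω α β : Type} [Fintype Ω] [Fintype α] [Fintype β] [DecidableEq α]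
    [DecidableEq β] {p : Ω → ℝ} (hp : ∀ ω, 0 ≤ p ω) (hs : ∑ ω, p ω = 1) (X : Ω → α)
    (Y : Ω → β) : 0 ≤ MI p X Y := by
  have h := H_submod' hp (fun ω => (X ω, Y ω)) (fun _ => ()) X Y (by grind) (by grind) (by grind)
  have h0 : H p (fun _ => ()) = 0 := by simp [H_eq, law, hs]
  unfold MI
  linarith

lemma joint_sum (p : ℝ) : ∑ ω, L.joint (PSp p) Wex2 ω = 1 := by
  have h := sum_law (L.joint (PSp p) Wex2) (fun ω => ω.s) (fun _ => 1)
  simp only [mul_one, joint_law_S] at h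
  rw [← h]
  simp [PSp]

/-- In each of the three subregions of `R_1`, the second rate is bounded both by `I(V;Y)` and by
`I(U2;Y|V,U,U1)`, hence is below `h(p)`. -/
lemma region_rate_lt {p : ℝ} (hp0 : 0 < p) (hp1 : p < 1) {R : ℝ × ℝ}
    (hR : R ∈ regionR11 (L.joint (PSp p) Wex2) ∪ regionR12 (L.joint (PSp p) Wex2) ∪
      regionR13 (L.joint (PSp p) Wex2)) : R.2 < hb p := by
  have A := joint_scheme1 L hp0 hp1
  have hh := hb_pos hp0 hp1
  have b1 := A.cMI_y_le_cMI_z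
  have b2 := A.cMI_z_le
  have b3 := A.cMI_v_le_cMI_s
  have mi1 := MI_nonneg A.nonneg (joint_sum L p) (fun ω => ω.v) (fun ω => (ω.u, ω.z))
  have mi2 := MI_nonneg A.nonneg (joint_sum L p) (fun ω => ω.v) (fun ω => (ω.z, ω.u, ω.u1))
  have mi3 := MI_nonneg A.nonneg (joint_sum L p) (fun ω => ω.v) (fun ω => (ω.z, ω.u, ω.u2))
  rcases hR with (hR | hR) | hR
  · obtain ⟨-, -, r11, r21, h1, -, h3, -, h5, -⟩ := hR
    rw [le_min_iff] at h5
    exact A.rate_lt hh (by linarith [h5.1]) h5.2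
  · obtain ⟨-, -, r11, r21, h1, -, h3, -, h5, -⟩ := hR
    rw [le_min_iff] at h5
    exact A.rate_lt hh (by linarith [h5.1]) h5.2
  · obtain ⟨-, -, r11, r21, h1, -, h3, -, h5, -⟩ := hR
    rw [le_min_iff] at h5
    exact A.rate_lt hh (by linarith [h5.2]) h5.1

end Joint

/-! ### Coding scheme 2 achieves `(0, h(p))` -/

/-- Law of `(U2, S)` with `U2` uniform and independent of the state. -/
def q2 (p : ℝ) : Bool × Bool → ℝ := fun t => 1 / 2 * PSp p t.2

/-- The sample point determined by `(U2, S)` when `U1` is constant, `X1 = 0` and `X2 = U2`. -/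
def f2 (t : Bool × Bool) : O7 Unit Bool Bool Bool Bool Bool Bool :=
  ((), t.1, false, t.1, t.2, Bool.xor t.1 t.2, t.1)

/-- The joint law of Coding scheme 2 with trivial `U1`, uniform `U2`, `X1 = 0` and `X2 = U2`. -/
def lawEx2 (p : ℝ) : O7 Unit Bool Bool Bool Bool Bool Bool → ℝ :=
  jointR2 (PSp p) Wex2 (fun _ => 1) (fun _ => 1 / 2) (fun _ _ x => if x = false then 1 else 0)
    (fun u _ x => if x = u then 1 else 0)

set_option synthInstance.maxSize 2000 in
lemma lawEx2_eq (p : ℝ) : lawEx2 p = law (q2 p) f2 := by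
  funext ω
  obtain ⟨⟨⟩, u2, x1, x2, s, y, z⟩ := ω
  cases u2 <;> cases x1 <;> cases x2 <;> cases s <;> cases y <;> cases z <;>
    simp [lawEx2, jointR2, law, q2, f2, Wex2, Fintype.sum_prod_type, O7.u2, O7.x1, O7.x2,
      O7.s, O7.y, O7.z] <;> ring

lemma logb_half : Real.logb 2 (1 / 2) = -1 := by
  rw [one_div, Real.logb_inv, Real.logb_self_eq_one (by norm_num)]

lemma H_q2_id {p : ℝ} (hp0 : 0 < p) (hp1 : p < 1) : H (q2 p) (fun t => t) = 1 + hb p := by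
  have h1 : Real.logb 2 (1 / 2 * p) = -1 + Real.logb 2 p := by
    rw [Real.logb_mul (by norm_num) hp0.ne', logb_half]
  have h2 : Real.logb 2 (1 / 2 * (1 - p)) = -1 + Real.logb 2 (1 - p) := by
    rw [Real.logb_mul (by norm_num) (by linarith), logb_half]
  have e : law (q2 p) (fun t => t) = q2 p := by
    funext a
    simp [law]
  unfold H ent
  rw [e]
  simp only [Fintype.sum_prod_type, Fintype.sum_bool, q2, PSp, if_true, h1, hb]
  simp only [Bool.false_eq_true, if_false, h2]
  ring

lemma ent_half : ent (fun _ : Bool => (1 / 2 : ℝ)) = 1 := by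
  simp only [ent, logb_half, Fintype.sum_bool]
  norm_num

lemma H_q2_fst (p : ℝ) : H (q2 p) (fun t => t.1) = 1 := by
  have e : law (q2 p) (fun t => t.1) = fun _ => 1 / 2 := by
    funext a
    cases a <;> simp [law, q2, PSp, Fintype.sum_prod_type] <;> ring
  rw [H, e, ent_half]

lemma H_q2_xor (p : ℝ) : H (q2 p) (fun t => Bool.xor t.1 t.2) = 1 := by
  have e : law (q2 p) (fun t => Bool.xor t.1 t.2) = fun _ => 1 / 2 := by
    funext a
    cases a <;> simp [law, q2, PSp, Fintype.sum_prod_type] <;> ring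
  rw [H, e, ent_half]

lemma H_q2_const (p : ℝ) : H (q2 p) (fun _ => ()) = 0 := by
  have e : law (q2 p) (fun _ => ()) = fun _ => 1 := by
    funext a
    simp [law, q2, PSp, Fintype.sum_prod_type]
  rw [H, e]
  simp [ent]

set_option synthInstance.maxSize 2000 in
lemma H_lawEx2 (p : ℝ) {α : Type} [Fintype α] [DecidableEq α]
    (X : O7 Unit Bool Bool Bool Bool Bool Bool → α) :
    H (lawEx2 p) X = H (q2 p) (fun t => X (f2 t)) := by
  rw [lawEx2_eq, H_law]

lemma mem_regionR23 {p : ℝ} (hp0 : 0 < p) (hp1 : p < 1) (h : hb p ≤ 1 - hb p) :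
    ((0 : ℝ), hb p) ∈ regionR23 (lawEx2 p) := by
  have hh := (hb_pos hp0 hp1).le
  -- the entropy of a variable equivalent to `(U2,S)`, to `U2`, to `Y`, or to a constant
  have c2 : ∀ {α : Type} [Fintype α] [DecidableEq α]
      (X : O7 Unit Bool Bool Bool Bool Bool Bool → α),
      (∀ t t', X (f2 t) = X (f2 t') ↔ t = t') → H (lawEx2 p) X = 1 + hb p := by
    intro α _ _ X hX
    rw [H_lawEx2, ← H_q2_id hp0 hp1]
    exact H_congr _ _ _ fun t t' _ _ => hX t t'
  have c1 : ∀ {α : Type} [Fintype α] [DecidableEq α]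
      (X : O7 Unit Bool Bool Bool Bool Bool Bool → α),
      (∀ t t', X (f2 t) = X (f2 t') ↔ t.1 = t'.1) → H (lawEx2 p) X = 1 := by
    intro α _ _ X hX
    rw [H_lawEx2, ← H_q2_fst p]
    exact H_congr _ _ _ fun t t' _ _ => hX t t'
  have cy : ∀ {α : Type} [Fintype α] [DecidableEq α]
      (X : O7 Unit Bool Bool Bool Bool Bool Bool → α),
      (∀ t t', X (f2 t) = X (f2 t') ↔ Bool.xor t.1 t.2 = Bool.xor t'.1 t'.2) →
      H (lawEx2 p) X = 1 := by
    intro α _ _ X hX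
    rw [H_lawEx2, ← H_q2_xor p]
    exact H_congr _ _ _ fun t t' _ _ => hX t t'
  have c0 : ∀ {α : Type} [Fintype α] [DecidableEq α]
      (X : O7 Unit Bool Bool Bool Bool Bool Bool → α),
      (∀ t t', X (f2 t) = X (f2 t')) → H (lawEx2 p) X = 0 := by
    intro α _ _ X hX
    rw [H_lawEx2, ← H_q2_const p]
    exact H_congr _ _ _ fun t t' _ _ => by simp [hX t t']
  have d1 : Hc (lawEx2 p) (fun ω => ω.s) (fun ω => (ω.z, ω.u2)) = hb p := by
    unfold Hc
    rw [c2 _ (by decide), c1 _ (by decide)]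
    ring
  have d2 : Hc (lawEx2 p) (fun ω => ω.s) (fun ω => (ω.y, ω.u1, ω.u2)) = 0 := by
    unfold Hc
    rw [c2 _ (by decide), c2 _ (by decide)]
    ring
  have d3 : cMI (lawEx2 p) (fun ω => ω.u1) (fun ω => ω.y) (fun ω => ω.u2) = 0 := by
    unfold cMI Hc
    rw [c1 _ (by decide), c1 _ (by decide), c2 _ (by decide), c2 _ (by decide)]
    ring
  have d4 : cMI (lawEx2 p) (fun ω => ω.u1) (fun ω => ω.z) (fun ω => (ω.s, ω.u2)) = 0 := by
    unfold cMI Hc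
    rw [c2 _ (by decide), c2 _ (by decide), c2 _ (by decide), c2 _ (by decide)]
    ring
  have d5 : cMI (lawEx2 p) (fun ω => ω.u2) (fun ω => ω.y) (fun ω => ω.u1) = 1 - hb p := by
    unfold cMI Hc
    rw [c1 _ (by decide), c0 _ (by decide), c2 _ (by decide), cy _ (by decide)]
    ring
  have d6 : MI (lawEx2 p) (fun ω => (ω.u1, ω.u2)) (fun ω => ω.y) = 1 - hb p := by
    unfold MI
    rw [c1 _ (by decide), cy _ (by decide), c2 _ (by decide)]
    ring
  have d7 : Hc (lawEx2 p) (fun ω => ω.s) (fun ω => (ω.u1, ω.u2, ω.y)) = 0 := by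
    unfold Hc
    rw [c2 _ (by decide), c2 _ (by decide)]
    ring
  refine ⟨le_rfl, hh, 0, 0, hb p, 0, le_rfl, le_rfl, hh, le_rfl, ?_⟩
  rw [d1, d2, d3, d4, d5, d6, d7]
  simp only [le_min_iff]
  refine ⟨?_, ?_, ⟨?_, ?_⟩, ⟨?_, ?_⟩, ?_, ?_⟩ <;> linarith

/-- **Example 1, second channel (Coding scheme 2 beats Coding scheme 1).**
If `1 - h(p) ≥ h(p)`, the rate pair `(0, h(p))` lies in `R_2`; for every admissible
joint law of Coding scheme 1 one has
`I(U2;Y|V,U,U1) ≤ I(U2;Y|S,U,U1) ≤ I(U2;Z|S,U)` and `I(V;Y) ≤ h(p)`; and every point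
`(0, R2)` of `R_1` satisfies `R2 < h(p)` (so `(0, h(p)) ∉ R_1`). -/
theorem example1_second_channel (p : ℝ) (hp0 : 0 < p) (hp1 : p < 1) :
    (hb p ≤ 1 - hb p → ((0 : ℝ), hb p) ∈ RegionR2 (PSp p) Wex2) ∧
    (∀ L : AuxLawR1 Bool Bool Bool Bool Bool,
      cMI (L.joint (PSp p) Wex2) (fun ω => ω.u2) (fun ω => ω.y)
          (fun ω => (ω.s, ω.u, ω.u1)) ≤
        cMI (L.joint (PSp p) Wex2) (fun ω => ω.u2) (fun ω => ω.z)
          (fun ω => (ω.s, ω.u)) ∧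
      cMI (L.joint (PSp p) Wex2) (fun ω => ω.u2) (fun ω => ω.y)
          (fun ω => (ω.v, ω.u, ω.u1)) ≤
        cMI (L.joint (PSp p) Wex2) (fun ω => ω.u2) (fun ω => ω.y)
          (fun ω => (ω.s, ω.u, ω.u1)) ∧
      MI (L.joint (PSp p) Wex2) (fun ω => ω.v) (fun ω => ω.y) ≤ hb p) ∧
    (∀ R2 : ℝ, ((0 : ℝ), R2) ∈ RegionR1 (PSp p) Wex2 → R2 < hb p) := by
  refine ⟨fun h => ?_, fun L => ?_, fun R2 hR => ?_⟩
  · apply subset_convexHull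
    refine ⟨⟨Unit, Bool, fun _ => 1, fun _ => 1 / 2, fun _ _ x => if x = false then 1 else 0,
      fun u _ x => if x = u then 1 else 0, ?_, ?_, ?_, ?_⟩, Or.inr (mem_regionR23 hp0 hp1 h)⟩
    · exact ⟨fun _ => by norm_num, by simp⟩
    · exact ⟨fun _ => by norm_num, by simp⟩
    · exact fun _ _ => ⟨fun _ => by dsimp only; split_ifs <;> norm_num, by simp⟩
    · exact fun _ _ => ⟨fun _ => by dsimp only; split_ifs <;> norm_num, by simp⟩
  · have A := joint_scheme1 L hp0 hp1
    exact ⟨A.cMI_y_le_cMI_z.trans A.cMI_z_le, A.cMI_v_le_cMI_s, A.MI_vy_le_h⟩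
  · -- the union lies in the convex half-plane `R.2 < h(p)`
    have hc : Convex ℝ {R : ℝ × ℝ | R.2 < hb p} :=
      convex_halfSpace_lt (IsLinearMap.mk (fun _ _ => rfl) (fun _ _ => rfl)) _
    refine convexHull_min ?_ hc hR
    rintro R ⟨L, hL⟩
    exact region_rate_lt L hp0 hp1 hL

end Paper
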